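/- Let F be a number field, and M a finite nontrivial continuous module for the absolute Galois group G_F. Then the continuous cohomology group H^1(G_F, M) is infinite. -/

import Mathlib

/-- Continuous 1-cocycles of a topological group `G` with values in a discrete
`G`-module `M`. -/
def contCocycles (G M : Type*) [Group G] [TopologicalSpace G] [AddCommGroup M]
    [DistribMulAction G M] : Set (G → M) :=
  {c | (@Continuous G M _ ⊥ c) ∧ ∀ g h : G, c (g * h) = c g + g • c h}

/-- Two cocycles are cohomologous if they differ by a coboundary `g ↦ g·m − m`.
`H¹(G, M)` (continuous cohomology) is the quotient of the continuous cocycles by this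
relation. -/
def cohomologous (G M : Type*) [Group G] [TopologicalSpace G] [AddCommGroup M]
    [DistribMulAction G M] (c c' : contCocycles G M) : Prop :=
  ∃ m : M, ∀ g : G, c'.1 g = c.1 g + (g • m - m)

open NumberField

lemma aux_nonunit (L : Type*) [Field L] [NumberField L] (x : 𝓞 L) (hx : x ≠ 0) :
    ∃ k : ℕ, ¬ IsUnit (1 - (k : 𝓞 L) * x) := by
  classical
  have h1 : ∀ φ : L →+* ℂ, 0 < ‖φ (x : L)‖ := fun φ => by
    rw [norm_pos_iff, map_ne_zero]; simpa using hx
  have h2 : ∃ k : ℕ, ∀ φ : L →+* ℂ, 2 < k * ‖φ (x : L)‖ := by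
    have : ∀ φ : L →+* ℂ, ∃ k : ℕ, 2 / ‖φ (x : L)‖ < k := fun φ => exists_nat_gt _
    choose k hk using this
    refine ⟨∑ φ, k φ, fun φ => ?_⟩
    have h3 : (k φ : ℝ) ≤ ((∑ φ, k φ : ℕ) : ℝ) := by
      exact_mod_cast Finset.single_le_sum (f := k) (fun _ _ => Nat.zero_le _) (Finset.mem_univ φ)
    have := (div_lt_iff₀ (h1 φ)).1 (hk φ)
    nlinarith [h1 φ]
  obtain ⟨k, hk⟩ := h2
  refine ⟨k, fun hu => ?_⟩
  rw [NumberField.isUnit_iff_norm] at hu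
  have h3 : ∀ φ : L →ₐ[ℚ] ℂ, 1 < ‖φ ((1 - (k : 𝓞 L) * x : 𝓞 L) : L)‖ := by
    intro φ
    have := hk φ.toRingHom
    simp only [map_sub, map_one, map_mul, map_natCast]
    have h4 := norm_sub_norm_le ((k : ℂ) * φ (x : L)) 1
    rw [norm_sub_rev] at h4
    simp at h4 this ⊢
    linarith
  have h5 : (1:ℝ) < ∏ φ : L →ₐ[ℚ] ℂ, ‖φ ((1 - (k : 𝓞 L) * x : 𝓞 L) : L)‖ := by
    have hne : (Finset.univ : Finset (L →ₐ[ℚ] ℂ)).Nonempty := by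
      rw [Finset.univ_nonempty_iff]
      exact ⟨(Classical.arbitrary (L →+* ℂ)).toRatAlgHom⟩
    calc (1:ℝ) = ∏ φ : L →ₐ[ℚ] ℂ, 1 := by simp
      _ < _ := Finset.prod_lt_prod_of_nonempty (fun _ _ => one_pos) (fun φ _ => h3 φ) hne
  rw [← norm_prod, ← Algebra.norm_eq_prod_embeddings ℚ ℂ] at h5
  have h6 := congrArg (fun q : ℚ => (q : ℝ)) hu
  simp only [RingOfIntegers.coe_norm] at h6
  simp at h5 h6
  linarith

lemma aux_theta (F L : Type*) [Field F] [NumberField F] [Field L] [NumberField L] [Algebra F L] :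
    ∃ θ : 𝓞 L, θ ≠ 0 ∧ ∀ τ : L ≃ₐ[F] L, τ ≠ 1 → τ • θ ≠ θ := by
  obtain ⟨α, hα⟩ := Field.exists_primitive_element F L
  have key : ∀ τ : L ≃ₐ[F] L, τ α = α → τ = 1 := by
    intro τ h
    have h2 : (⊤ : IntermediateField F L) ≤ IntermediateField.fixedField (Subgroup.zpowers τ) := by
      rw [← hα, IntermediateField.adjoin_simple_le_iff]
      intro ⟨g, hg⟩
      have : Subgroup.zpowers τ ≤ MulAction.stabilizer _ α := by
        rw [Subgroup.zpowers_le]; exact h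
      exact this hg
    ext y
    exact h2 (IntermediateField.mem_top (x := y)) ⟨τ, Subgroup.mem_zpowers τ⟩
  by_cases h0 : α = 0
  · refine ⟨1, one_ne_zero, fun τ hτ => absurd (key τ (by simp [h0])) hτ⟩
  obtain ⟨n, hn, hi⟩ := IsAlgebraic.exists_integral_multiple
    ((IsFractionRing.isAlgebraic_iff ℤ ℚ L).2 (Algebra.IsAlgebraic.isAlgebraic α))
  have hnL : ((n : ℤ) : L) ≠ 0 := by exact_mod_cast hn
  refine ⟨⟨n • α, hi⟩, ?_, fun τ hτ h => hτ (key τ ?_)⟩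
  · intro h
    have := congrArg (fun z : 𝓞 L => (z : L)) h
    simp at this
    tauto
  · have := congrArg (fun z : 𝓞 L => (z : L)) h
    change τ (n • α) = n • α at this
    simpa [hn] using this

lemma aux_prime (F L : Type*) [Field F] [NumberField F] [Field L] [NumberField L] [Algebra F L]
    (c : 𝓞 L) (hc : c ≠ 0) :
    ∃ v : IsDedekindDomain.HeightOneSpectrum (𝓞 L), c ∉ v.asIdeal ∧
      ∃ a : 𝓞 L, a ∈ v.asIdeal ∧ a ∉ v.asIdeal ^ 2 ∧
        ∀ τ : L ≃ₐ[F] L, τ ≠ 1 → τ • a ∉ v.asIdeal := by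
  classical
  obtain ⟨θ, hθ0, hθ⟩ := aux_theta F L
  set D : 𝓞 L := ∏ τ ∈ Finset.univ.erase (1 : L ≃ₐ[F] L), (θ - τ • θ) with hD
  have hD0 : D ≠ 0 := by
    rw [hD, Finset.prod_ne_zero_iff]
    intro τ hτ
    exact sub_ne_zero.2 (hθ τ (Finset.ne_of_mem_erase hτ)).symm
  set m : ℕ := Ideal.absNorm (Ideal.span {c * D}) with hm
  have hm0 : m ≠ 0 := by
    rw [hm, Ne, Ideal.absNorm_eq_zero_iff, Ideal.span_singleton_eq_bot]
    exact mul_ne_zero hc hD0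
  have hmd : c * D ∣ (m : 𝓞 L) := by
    rw [← Ideal.mem_span_singleton]; exact Ideal.absNorm_mem _
  obtain ⟨k, hk⟩ := aux_nonunit L ((m : 𝓞 L) * θ) (mul_ne_zero (by exact_mod_cast hm0) hθ0)
  set u : 𝓞 L := 1 - (k : 𝓞 L) * (m * θ) with hu
  obtain ⟨P, hP, huP⟩ := exists_max_ideal_of_mem_nonunits hk
  have hkm : (k : 𝓞 L) * m ∉ P := by
    intro h
    apply hP.ne_top
    rw [Ideal.eq_top_iff_one]
    have : (1 : 𝓞 L) = u + ((k : 𝓞 L) * m) * θ := by rw [hu]; ring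
    rw [this]
    exact P.add_mem huP (P.mul_mem_right _ h)
  have hcD : c * D ∉ P := fun h => hkm (P.mul_mem_left _ (P.mem_of_dvd hmd h))
  have hP0 : P ≠ ⊥ := by
    rintro rfl
    exact hP.ne_top (by
      have h0 : u = 0 := huP
      exfalso
      have h1 : (m : 𝓞 L) * (k * θ) = 1 := by linear_combination -h0 + hu
      have hmax := Ring.isField_iff_maximal_bot.2 hP
      exact RingOfIntegers.not_isField L hmax)
  have huτ : ∀ τ : L ≃ₐ[F] L, τ ≠ 1 → τ • u ∉ P := by
    intro τ hτ h
    have h1 : τ • u - u = ((k : 𝓞 L) * m) * (θ - τ • θ) := by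
      rw [hu, smul_sub, smul_mul', smul_mul', smul_one]
      have e1 : ∀ j : ℕ, τ • (j : 𝓞 L) = j := fun j =>
        map_natCast (MulSemiringAction.toRingHom _ (𝓞 L) τ) j
      rw [e1, e1]; ring
    have h2 : ((k : 𝓞 L) * m) * (θ - τ • θ) ∈ P := h1 ▸ P.sub_mem h huP
    rcases hP.isPrime.mem_or_mem h2 with h3 | h3
    · exact hkm h3
    · apply hcD
      apply P.mul_mem_left
      exact P.mem_of_dvd (Finset.dvd_prod_of_mem _ (Finset.mem_erase.2 ⟨hτ, Finset.mem_univ _⟩)) h3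
  refine ⟨⟨P, hP.isPrime, hP0⟩, fun h => hcD (P.mul_mem_right _ h), ?_⟩
  by_cases hu2 : u ∈ P ^ 2
  swap
  · exact ⟨u, huP, hu2, huτ⟩
  obtain ⟨t, htP, ht2⟩ : ∃ t ∈ P, t ∉ P ^ 2 := by
    have : P ^ 2 < P := by
      simpa using Ideal.pow_right_strictAnti P hP0 hP.ne_top (show 1 < 2 by norm_num)
    exact SetLike.exists_of_lt this
  set y : 𝓞 L := ∏ τ ∈ Finset.univ.erase (1 : L ≃ₐ[F] L), τ • u with hy
  have hyP : y ∉ P := by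
    intro h
    obtain ⟨τ, hτ, h2⟩ := (hP.isPrime.prod_mem_iff).1 h
    exact huτ τ (Finset.ne_of_mem_erase hτ) h2
  refine ⟨u + t * y, P.add_mem huP (P.mul_mem_right _ htP), fun h => ?_, fun τ hτ h => ?_⟩
  · have h3 : t * y ∈ P ^ 2 := by
      have := (P ^ 2).sub_mem h hu2
      simpa using this
    rw [mul_comm] at h3
    rcases (Ideal.IsPrime.mul_mem_pow P h3) with h4 | h4
    · exact hyP h4
    · exact ht2 h4
  · rw [smul_add, smul_mul'] at h
    have hyτ : τ • y ∈ P := by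
      have : u ∣ τ • y := by
        have h5 : τ⁻¹ • u ∣ y := Finset.dvd_prod_of_mem _
          (Finset.mem_erase.2 ⟨inv_ne_one.2 hτ, Finset.mem_univ _⟩)
        obtain ⟨w, hw⟩ := h5
        refine ⟨τ • w, ?_⟩
        rw [hw, smul_mul', smul_inv_smul]
      exact P.mem_of_dvd this huP
    exact huτ τ hτ ((P.add_mem_iff_left (P.mul_mem_left _ hyτ)).1 h)

lemma aux_val (F L : Type*) [Field F] [NumberField F] [Field L] [NumberField L] [Algebra F L]
    (v : IsDedekindDomain.HeightOneSpectrum (𝓞 L)) (p : ℕ) (hp : p ≠ 0) (a r : 𝓞 L)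
    (ha : a ∈ v.asIdeal) (ha2 : a ∉ v.asIdeal ^ 2)
    (haτ : ∀ τ : L ≃ₐ[F] L, τ ≠ 1 → τ • a ∉ v.asIdeal)
    (hr : ∀ τ : L ≃ₐ[F] L, τ • r ∉ v.asIdeal)
    {ι : Type*} [Fintype ι] (τ : ι → L ≃ₐ[F] L) (c : ι → ℤ) (x₀ : ι) (h₀ : τ x₀ = 1)
    (hτ : ∀ x, x ≠ x₀ → τ x ≠ 1) (γ : L)
    (h : γ ^ p = ∏ x, (τ x ((a : L) / (r : L))) ^ c x) : (p : ℤ) ∣ c x₀ := by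
  classical
  have hva : v.valuation L (a : L) = WithZero.exp (-1 : ℤ) := by
    rw [IsDedekindDomain.HeightOneSpectrum.valuation_of_algebraMap]
    apply le_antisymm
    · have := (v.intValuation_le_pow_iff_mem a 1).2 (by simpa using ha)
      simpa using this
    · by_contra hlt
      push Not at hlt
      apply ha2
      rw [← v.intValuation_le_pow_iff_mem a 2]
      by_cases ha0 : a = 0
      · simp [ha0]
      have hne := v.intValuation_ne_zero a ha0
      rw [← WithZero.exp_log hne] at hlt ⊢
      rw [WithZero.exp_lt_exp] at hlt
      rw [WithZero.exp_le_exp]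
      push_cast; omega
  have e1 : ∀ (σ : L ≃ₐ[F] L) (z : 𝓞 L), σ • z ∉ v.asIdeal →
      v.valuation L (σ (z : L)) = 1 := by
    intro σ z hz
    exact (v.valuation_eq_one_iff_notMem (K := L)).2 hz
  have h1 := congrArg (v.valuation L) h
  rw [map_pow, map_prod, Finset.prod_eq_single x₀] at h1
  · rw [h₀] at h1
    have e2 := e1 1 r (hr 1)
    simp only [AlgEquiv.one_apply] at e2 h1
    rw [map_zpow₀, map_div₀, e2, hva, div_one] at h1
    have hγ : v.valuation L γ ≠ 0 := by
      intro h0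
      rw [h0] at h1
      rw [zero_pow hp] at h1
      exact (zpow_ne_zero _ (WithZero.exp_ne_zero)) h1.symm
    rw [← WithZero.exp_log hγ, ← WithZero.exp_nsmul, ← WithZero.exp_zsmul, WithZero.exp_inj] at h1
    refine ⟨-WithZero.log (v.valuation L γ), ?_⟩
    simp at h1
    linarith
  · intro x _ hx
    rw [map_zpow₀, map_div₀, map_div₀, e1 _ _ (haτ _ (hτ x hx)),
      e1 _ _ (hr _)]
    simp
  · simp

/-- corestriction -/
noncomputable def corFun {G M : Type*} [Group G] [AddCommGroup M] [DistribMulAction G M]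
    (N : Subgroup G) [Fintype (G ⧸ N)] (f : G → M) (g : G) : M :=
  ∑ x : G ⧸ N, (g • x).out • f ((g • x).out⁻¹ * g * x.out)

lemma out_smul_inv_mul_mem {G : Type*} [Group G] (N : Subgroup G) (g : G) (x : G ⧸ N) :
    (g • x).out⁻¹ * g * x.out ∈ N := by
  rw [mul_assoc, ← QuotientGroup.eq, QuotientGroup.out_eq']
  have : ((g * x.out : G) : G ⧸ N) = g • ((x.out : G) : G ⧸ N) := rfl
  rw [this, QuotientGroup.out_eq']

lemma corFun_cocycle {G M : Type*} [Group G] [AddCommGroup M] [DistribMulAction G M]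
    (N : Subgroup G) [Fintype (G ⧸ N)] (hN : ∀ n ∈ N, ∀ m : M, n • m = m) (f : G → M)
    (hf : ∀ g ∈ N, ∀ h ∈ N, f (g * h) = f g + f h) (g h : G) :
    corFun N f (g * h) = corFun N f g + g • corFun N f h := by
  unfold corFun
  have e : ∑ x : G ⧸ N, (g • x).out • f ((g • x).out⁻¹ * g * x.out) =
      ∑ x : G ⧸ N, (g • h • x).out • f ((g • h • x).out⁻¹ * g * (h • x).out) :=
    (Equiv.sum_comp (MulAction.toPerm h)
      (fun x : G ⧸ N => (g • x).out • f ((g • x).out⁻¹ * g * x.out))).symm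
  rw [e, Finset.smul_sum, ← Finset.sum_add_distrib]
  refine Finset.sum_congr rfl fun x _ => ?_
  have h1 : ((g * h) • x).out⁻¹ * (g * h) * x.out =
      ((g • h • x).out⁻¹ * g * (h • x).out) * ((h • x).out⁻¹ * h * x.out) := by
    rw [mul_smul]; group
  rw [h1, hf _ (out_smul_inv_mul_mem N g (h • x)) _ (out_smul_inv_mul_mem N h x), smul_add,
    mul_smul g h x]
  congr 1
  have h2 := hN _ (out_smul_inv_mul_mem N g (h • x)) (f ((h • x).out⁻¹ * h * x.out))
  have h3 := congrArg (fun z => (g • h • x).out • z) h2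
  simp only [← mul_smul] at h3 ⊢
  rw [← h3]
  congr 1
  group

lemma smul_quot_eq {G : Type*} [Group G] (N : Subgroup G) [hn : N.Normal] (g : G) (hg : g ∈ N)
    (x : G ⧸ N) : g • x = x := by
  induction x using QuotientGroup.induction_on with
  | H z =>
    change ((g * z : G) : G ⧸ N) = z
    rw [eq_comm, QuotientGroup.eq, ← mul_assoc]
    simpa using hn.conj_mem g hg z⁻¹

lemma corFun_mem {G M : Type*} [Group G] [AddCommGroup M] [DistribMulAction G M]
    (N : Subgroup G) [Fintype (G ⧸ N)] [N.Normal] (f : G → M) (g : G) (hg : g ∈ N) :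
    corFun N f g = ∑ x : G ⧸ N, x.out • f (x.out⁻¹ * g * x.out) := by
  unfold corFun
  simp only [smul_quot_eq N g hg]

lemma continuous_of_cocycle {G M : Type*} [Group G] [TopologicalSpace G] [IsTopologicalGroup G]
    [AddCommGroup M] [DistribMulAction G M] (c : G → M)
    (hc : ∀ g h : G, c (g * h) = c g + g • c h) (U : Set G) (hU : U ∈ nhds (1 : G))
    (h0 : ∀ g ∈ U, c g = 0) : @Continuous G M _ ⊥ c := by
  let _ : TopologicalSpace M := ⊥
  have : DiscreteTopology M := ⟨rfl⟩
  rw [continuous_iff_continuousAt]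
  intro g
  have : (fun z => g⁻¹ * z) ⁻¹' U ∈ nhds g := by
    apply (continuous_const_mul g⁻¹).continuousAt.preimage_mem_nhds
    simpa using hU
  rw [ContinuousAt, nhds_discrete M, Filter.tendsto_pure]
  filter_upwards [this] with z hz
  have := hc g (g⁻¹ * z)
  rw [h0 _ hz] at this
  simpa using this

/-- characters. -/
lemma aux_char (Ω : Type*) [Field Ω] [IsAlgClosed Ω] [CharZero Ω] (M : Type*) [AddCommGroup M]
    [Finite M] (p : ℕ) [hp : Fact p.Prime] (hpM : p ∣ Nat.card M) :
    ∃ (θ : Ω → M) (ψ : M → Ω) (ζ : Ω), (∀ x y, x ^ p = 1 → y ^ p = 1 → θ (x * y) = θ x + θ y) ∧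
      θ 1 = 0 ∧ ψ 0 = 1 ∧ (∀ x y, ψ (x + y) = ψ x * ψ y) ∧ ζ ^ p = 1 ∧ ψ (θ ζ) ≠ 1 ∧
      ∀ (e : M →+ M) (σ : Ω ≃+* Ω), ∃ c : ℤ, ∀ z : Ω, z ^ p = 1 → ψ (e (θ (σ z))) = z ^ c := by
  classical
  obtain ⟨w, hw⟩ := exists_prime_addOrderOf_dvd_card' (G := M) p hpM
  have : HasEnoughRootsOfUnity Ω p := inferInstance
  obtain ⟨z0, hz0⟩ := HasEnoughRootsOfUnity.exists_primitiveRoot Ω p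
  have hcard : Nat.card (rootsOfUnity p Ω) = p := hz0.card_rootsOfUnity
  have hcard2 : Nat.card (Multiplicative (AddSubgroup.zmultiples w)) = p := by
    rw [← hw]; exact Nat.card_zmultiples w
  let E := mulEquivOfPrimeCardEq hcard hcard2
  let Θ : rootsOfUnity p Ω →* Multiplicative M :=
    (AddMonoidHom.toMultiplicative (AddSubgroup.zmultiples w).subtype).comp E.toMonoidHom
  have hΘ : Function.Injective Θ := by
    intro x y h
    apply E.injective
    exact Subtype.ext h
  let Z : rootsOfUnity p Ω := rootsOfUnity.mkOfPowEq z0 hz0.pow_eq_one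
  have hZ : Z ≠ 1 := by
    intro h
    have : z0 = 1 := by simpa [Z] using congrArg (fun z : rootsOfUnity p Ω => ((z : Ωˣ) : Ω)) h
    exact hz0.ne_one hp.out.one_lt this
  have hZ2 : Θ Z ≠ 1 := fun h => hZ (hΘ (h.trans (map_one Θ).symm))
  have : NeZero (Monoid.exponent (Multiplicative M)) := ⟨Monoid.exponent_ne_zero_of_finite⟩
  obtain ⟨Ψ, hΨ⟩ := CommGroup.exists_apply_ne_one_of_hasEnoughRootsOfUnity (Multiplicative M) Ω hZ2
  let θ : Ω → M := fun z => if h : z ^ p = 1 then (Θ (rootsOfUnity.mkOfPowEq z h)).toAdd else 0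
  have hθ : ∀ z : rootsOfUnity p Ω, θ ((z : Ωˣ) : Ω) = (Θ z).toAdd := by
    intro z
    have h : ((z : Ωˣ) : Ω) ^ p = 1 := by
      have := z.2; rw [mem_rootsOfUnity'] at this; exact this
    simp only [θ, dif_pos h]
    congr 2
    ext; simp
  have hlift : ∀ x : Ω, x ^ p = 1 → ∃ z : rootsOfUnity p Ω, ((z : Ωˣ) : Ω) = x := fun x hx =>
    ⟨rootsOfUnity.mkOfPowEq x hx, by simp⟩
  refine ⟨θ, fun m => (Ψ (Multiplicative.ofAdd m) : Ωˣ), z0, ?_, ?_, ?_, ?_, hz0.pow_eq_one, ?_, ?_⟩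
  · intro x y hx hy
    obtain ⟨x, rfl⟩ := hlift x hx
    obtain ⟨y, rfl⟩ := hlift y hy
    have : (((x : Ωˣ) : Ω) * ((y : Ωˣ) : Ω)) = (((x * y : rootsOfUnity p Ω) : Ωˣ) : Ω) := by simp
    rw [this, hθ, hθ, hθ, map_mul]; rfl
  · have := hθ 1
    simpa using this
  · simp
  · intro x y; simp
  · have h1 : z0 = ((Z : Ωˣ) : Ω) := by simp [Z]
    rw [h1, hθ]
    simpa using hΨ
  · intro e σ
    let S : rootsOfUnity p Ω →* rootsOfUnity p Ω := restrictRootsOfUnity σ.toRingHom p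
    let C : rootsOfUnity p Ω →* Ωˣ :=
      (Ψ.comp (AddMonoidHom.toMultiplicative e)).comp (Θ.comp S)
    let C' : rootsOfUnity p Ω →* rootsOfUnity p Ω := C.codRestrict _ (by
      intro z
      rw [mem_rootsOfUnity, ← map_pow]
      have : z ^ p = 1 := by
        have h9 := pow_card_eq_one' (G := rootsOfUnity p Ω) (x := z)
        rwa [hcard] at h9
      rw [this, map_one])
    obtain ⟨c, hc⟩ := MonoidHom.map_cyclic C'
    refine ⟨c, fun z hz => ?_⟩
    obtain ⟨z, rfl⟩ := hlift z hz
    have h1 : σ ((z : Ωˣ) : Ω) = ((S z : Ωˣ) : Ω) := rfl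
    rw [h1, hθ]
    have := congrArg (fun z : rootsOfUnity p Ω => ((z : Ωˣ) : Ω)) (hc z)
    simp only [Subgroup.coe_zpow, Units.val_zpow_eq_zpow_val] at this
    exact this

theorem stmt_8 (F : Type*) [Field F] [NumberField F]
    (M : Type*) [AddCommGroup M] [Finite M] [Nontrivial M]
    [DistribMulAction (AlgebraicClosure F ≃ₐ[F] AlgebraicClosure F) M]
    (hcont : ∀ m : M,
      IsOpen (MulAction.stabilizer (AlgebraicClosure F ≃ₐ[F] AlgebraicClosure F) m
        : Set (AlgebraicClosure F ≃ₐ[F] AlgebraicClosure F))) :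
    Infinite (Quot (cohomologous (AlgebraicClosure F ≃ₐ[F] AlgebraicClosure F) M)) := by
  classical
  by_contra hfin
  rw [not_infinite_iff_finite] at hfin
  obtain ⟨p, hp, hpM⟩ := Nat.exists_prime_and_dvd (Finite.one_lt_card (α := M)).ne'
  have : Fact p.Prime := ⟨hp⟩
  have hcz : CharZero (AlgebraicClosure F) :=
    charZero_of_injective_algebraMap (algebraMap F (AlgebraicClosure F)).injective
  obtain ⟨θ, ψ, ζ, hθ, hθ1, hψ0, hψ, hζ, hψζ, hc⟩ := aux_char (AlgebraicClosure F) M p hpM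
  -- the field `L`
  have hnhd : (⋂ m : M, (MulAction.stabilizer (AlgebraicClosure F ≃ₐ[F] AlgebraicClosure F) m
        : Set (AlgebraicClosure F ≃ₐ[F] AlgebraicClosure F))) ∩
      (⋂ z ∈ {z : AlgebraicClosure F | z ^ p = 1},
        (MulAction.stabilizer (AlgebraicClosure F ≃ₐ[F] AlgebraicClosure F) z
        : Set (AlgebraicClosure F ≃ₐ[F] AlgebraicClosure F))) ∈
      nhds (1 : AlgebraicClosure F ≃ₐ[F] AlgebraicClosure F) := by
    apply Filter.inter_mem
    · rw [Filter.iInter_mem]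
      exact fun m => (hcont m).mem_nhds (one_mem _)
    · rw [Filter.biInter_mem]
      · exact fun z _ => (stabilizer_isOpen_of_isIntegral z).mem_nhds
          (one_mem _)
      · apply Set.Finite.subset (Polynomial.nthRootsFinset p (1 : AlgebraicClosure F)).finite_toSet
        intro z hz
        exact (Polynomial.mem_nthRootsFinset hp.pos 1).2 hz
  obtain ⟨L, hL⟩ := (InfiniteGalois.krullTopology_mem_nhds_one_iff_of_isGalois _).1 hnhd
  have hNM : ∀ n ∈ L.fixingSubgroup, ∀ m : M, n • m = m := fun n hn m =>
    Set.mem_iInter.1 (hL hn).1 m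
  have hNz : ∀ n ∈ L.fixingSubgroup, ∀ z : AlgebraicClosure F, z ^ p = 1 → n z = z :=
    fun n hn z hz => Set.mem_iInter₂.1 (hL hn).2 z hz
  have hNo := L.toIntermediateField.fixingSubgroup_isOpen
  have hLnf : NumberField L := NumberField.of_module_finite F L
  set N := L.fixingSubgroup with hN
  have hNn : N.Normal := inferInstance
  have hNf : Finite ((AlgebraicClosure F ≃ₐ[F] AlgebraicClosure F) ⧸ N) :=
    Subgroup.quotient_finite_of_isOpen N hNo
  have := Fintype.ofFinite ((AlgebraicClosure F ≃ₐ[F] AlgebraicClosure F) ⧸ N)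
  -- Kummer cocycles
  have hB : ∀ b : 𝓞 L, ∃ β : AlgebraicClosure F, β ^ p = ((b : L) : AlgebraicClosure F) :=
    fun b => IsAlgClosed.exists_pow_nat_eq _ hp.pos
  choose B hB using hB
  have hB0 : ∀ b : 𝓞 L, b ≠ 0 → B b ≠ 0 := by
    intro b hb h
    have := hB b
    rw [h, zero_pow hp.ne_zero] at this
    apply hb
    simpa using this.symm
  have hBN : ∀ b : 𝓞 L, b ≠ 0 → ∀ n ∈ N, (n (B b) / B b) ^ p = 1 := by
    intro b hb n hn
    have h1 : n ((b : L) : AlgebraicClosure F) = ((b : L) : AlgebraicClosure F) :=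
      hn (b : L)
    rw [div_pow, ← map_pow, hB, h1]
    apply div_self
    simpa using hb
  let f : 𝓞 L → (AlgebraicClosure F ≃ₐ[F] AlgebraicClosure F) → M :=
    fun b g => θ (g (B b) / B b)
  have hf : ∀ b : 𝓞 L, b ≠ 0 → ∀ g ∈ N, ∀ h ∈ N, f b (g * h) = f b g + f b h := by
    intro b hb g hg h hh
    have h0 := hB0 b hb
    have h1 := hNz g hg _ (hBN b hb h hh)
    have h2 : (g * h) (B b) / B b = (g (B b) / B b) * (h (B b) / B b) := by
      rw [← h1, map_div₀]
      have : g (B b) ≠ 0 := by simpa using h0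
      rw [AlgEquiv.mul_apply]
      field_simp
    simp only [f]
    rw [h2, hθ _ _ (hBN b hb g hg) (hBN b hb h hh)]
  have hcor : ∀ b : 𝓞 L, b ≠ 0 → corFun N (f b) ∈
      contCocycles (AlgebraicClosure F ≃ₐ[F] AlgebraicClosure F) M := by
    intro b hb
    have hcoc := corFun_cocycle N hNM (f b) (hf b hb)
    refine ⟨continuous_of_cocycle _ hcoc
      ((N : Set (AlgebraicClosure F ≃ₐ[F] AlgebraicClosure F)) ∩
        ⋂ x : (AlgebraicClosure F ≃ₐ[F] AlgebraicClosure F) ⧸ N,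
        (MulAction.stabilizer (AlgebraicClosure F ≃ₐ[F] AlgebraicClosure F) (x.out (B b))
        : Set (AlgebraicClosure F ≃ₐ[F] AlgebraicClosure F))) ?_ ?_, hcoc⟩
    · apply Filter.inter_mem
      · exact hNo.mem_nhds (one_mem _)
      · rw [Filter.iInter_mem]
        exact fun x => (stabilizer_isOpen_of_isIntegral _).mem_nhds
          (one_mem _)
    · rintro g ⟨hg, hg2⟩
      rw [corFun_mem N _ g hg]
      apply Finset.sum_eq_zero
      intro x _
      have h1 : g (x.out (B b)) = x.out (B b) := Set.mem_iInter.1 hg2 x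
      have h2 : (x.out⁻¹ * g * x.out) (B b) = B b := by
        rw [AlgEquiv.mul_apply, AlgEquiv.mul_apply, h1]
        exact x.out.symm_apply_apply _
      simp only [f]
      rw [h2, div_self (hB0 b hb), hθ1, smul_zero]
  let Φ : {b : 𝓞 L // b ≠ 0} →
      Quot (cohomologous (AlgebraicClosure F ≃ₐ[F] AlgebraicClosure F) M) :=
    fun b => Quot.mk _ ⟨_, hcor b.1 b.2⟩
  have hΦ : ∀ b b', Φ b = Φ b' → ∀ g ∈ N, corFun N (f b.1) g = corFun N (f b'.1) g := by
    intro b b' h g hg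
    have := congrArg (Quot.lift (fun c : contCocycles
      (AlgebraicClosure F ≃ₐ[F] AlgebraicClosure F) M => c.1 g) (by
        rintro c c' ⟨m, hm⟩
        simp [hm g, hNM g hg m])) h
    exact this
  have hrange : Finite (Set.range Φ) := inferInstance
  have := Fintype.ofFinite (Set.range Φ)
  have hrep : ∀ q : Set.range Φ, ∃ b, Φ b = q := fun q => q.2
  choose rep hrep using hrep
  obtain ⟨v, hcv, a, ha, ha2, haτ⟩ := aux_prime F L
    (∏ q : Set.range Φ, ∏ τ : L ≃ₐ[F] L, τ • (rep q).1) (by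
      rw [Finset.prod_ne_zero_iff]; intro q _
      rw [Finset.prod_ne_zero_iff]; intro τ _
      rw [smul_ne_zero_iff_ne]
      exact (rep q).2)
  have ha0 : a ≠ 0 := by rintro rfl; exact ha2 (zero_mem _)
  set q : Set.range Φ := ⟨Φ ⟨a, ha0⟩, ⟨a, ha0⟩, rfl⟩ with hq
  set r : 𝓞 L := (rep q).1 with hr
  have hr0 : r ≠ 0 := (rep q).2
  have hrv : ∀ τ : L ≃ₐ[F] L, τ • r ∉ v.asIdeal := by
    intro τ h
    apply hcv
    refine Ideal.mem_of_dvd _ ?_ h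
    exact (Finset.dvd_prod_of_mem (fun τ : L ≃ₐ[F] L => τ • r) (Finset.mem_univ τ)).trans
      (Finset.dvd_prod_of_mem (fun q : Set.range Φ => ∏ τ : L ≃ₐ[F] L, τ • (rep q).1)
        (Finset.mem_univ q))
  have hagree : ∀ g ∈ N, corFun N (f a) g = corFun N (f r) g :=
    hΦ ⟨a, ha0⟩ (rep q) (hrep q).symm
  -- the exponents
  have hcx : ∀ x : (AlgebraicClosure F ≃ₐ[F] AlgebraicClosure F) ⧸ N, ∃ c : ℤ,
      ∀ z : AlgebraicClosure F, z ^ p = 1 → ψ (x.out • θ (x.out⁻¹ z)) = z ^ c := fun x =>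
    hc (DistribSMul.toAddMonoidHom M x.out) (x.out⁻¹ : AlgebraicClosure F ≃ₐ[F] _).toRingEquiv
  choose c hc using hcx
  have hψsum : ∀ (s : Finset ((AlgebraicClosure F ≃ₐ[F] AlgebraicClosure F) ⧸ N))
      (u : (AlgebraicClosure F ≃ₐ[F] AlgebraicClosure F) ⧸ N → M),
      ψ (∑ x ∈ s, u x) = ∏ x ∈ s, ψ (u x) := by
    intro s u
    induction s using Finset.induction_on with
    | empty => simpa using hψ0
    | insert x s hx ih => rw [Finset.sum_insert hx, Finset.prod_insert hx, hψ, ih]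
  have hψcor : ∀ b : 𝓞 L, b ≠ 0 → ∀ g ∈ N, ψ (corFun N (f b) g) =
      ∏ x : (AlgebraicClosure F ≃ₐ[F] AlgebraicClosure F) ⧸ N,
        (g (x.out (B b)) / x.out (B b)) ^ c x := by
    intro b hb g hg
    rw [corFun_mem N _ g hg, hψsum]
    refine Finset.prod_congr rfl fun x _ => ?_
    have hconj : x.out⁻¹ * g * x.out ∈ N := by simpa using hNn.conj_mem g hg x.out⁻¹
    have h1 : x.out⁻¹ (g (x.out (B b)) / x.out (B b)) = (x.out⁻¹ * g * x.out) (B b) / B b := by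
      rw [map_div₀]
      congr 1
      exact x.out.symm_apply_apply _
    have h2 : g (x.out (B b)) / x.out (B b) = x.out ((x.out⁻¹ * g * x.out) (B b) / B b) := by
      rw [← h1]
      exact (x.out.apply_symm_apply _).symm
    rw [← hc x, h1]
    rw [h2, ← map_pow, hBN b hb _ hconj, map_one]
  set γ : AlgebraicClosure F := ∏ x : (AlgebraicClosure F ≃ₐ[F] AlgebraicClosure F) ⧸ N,
    (x.out (B a) / x.out (B r)) ^ c x with hγ
  have hfix : ∀ g ∈ N, g γ = γ := by
    intro g hg
    have h1 := hagree g hg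
    apply_fun ψ at h1
    rw [hψcor a ha0 g hg, hψcor r hr0 g hg] at h1
    have h2 : ∀ b : 𝓞 L, b ≠ 0 → ∀ σ : AlgebraicClosure F ≃ₐ[F] AlgebraicClosure F,
      σ (B b) ≠ 0 := fun b hb σ => by simpa using hB0 b hb
    have h4 : ∀ b : 𝓞 L, b ≠ 0 → (∏ x : (AlgebraicClosure F ≃ₐ[F] AlgebraicClosure F) ⧸ N,
        (x.out (B b)) ^ c x) ≠ 0 := fun b hb =>
      Finset.prod_ne_zero_iff.2 fun x _ => zpow_ne_zero _ (h2 b hb _)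
    have h5 : ∀ b : 𝓞 L, b ≠ 0 → (∏ x : (AlgebraicClosure F ≃ₐ[F] AlgebraicClosure F) ⧸ N,
        (g (x.out (B b))) ^ c x) ≠ 0 := fun b hb =>
      Finset.prod_ne_zero_iff.2 fun x _ => zpow_ne_zero _ (by simpa using hB0 b hb)
    rw [hγ, map_prod]
    simp only [map_zpow₀, map_div₀, div_zpow, Finset.prod_div_distrib] at h1 ⊢
    rw [div_eq_div_iff (h4 a ha0) (h4 r hr0)] at h1
    rw [div_eq_div_iff (h5 r hr0) (h4 r hr0), h1, mul_comm]
  have hγL : γ ∈ L.toIntermediateField := by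
    rw [← InfiniteGalois.fixedField_fixingSubgroup L.toIntermediateField]
    exact fun g => hfix g.1 g.2
  let τ : (AlgebraicClosure F ≃ₐ[F] AlgebraicClosure F) ⧸ N → (L ≃ₐ[F] L) := fun x =>
    AlgEquiv.restrictNormalHom L x.out
  have hτN : ∀ σ : AlgebraicClosure F ≃ₐ[F] AlgebraicClosure F,
      AlgEquiv.restrictNormalHom L σ = 1 ↔ σ ∈ N := fun σ =>
    (FiniteGaloisIntermediateField.mem_fixingSubgroup_iff σ L).symm
  have hone : ((1 : (AlgebraicClosure F ≃ₐ[F] AlgebraicClosure F) ⧸ N)).out ∈ N := by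
    rw [← QuotientGroup.eq_one_iff, QuotientGroup.out_eq']
  have hdvd := aux_val F L v p hp.ne_zero a r ha ha2 haτ hrv τ c 1 ((hτN _).2 hone) (by
      intro x hx h
      apply hx
      rw [hτN, ← QuotientGroup.eq_one_iff, QuotientGroup.out_eq'] at h
      exact h) ⟨γ, hγL⟩ (by
      apply Subtype.ext
      have h1 : ∀ (x : (AlgebraicClosure F ≃ₐ[F] AlgebraicClosure F) ⧸ N) (y : L),
          ((τ x y : L) : AlgebraicClosure F) = x.out (y : AlgebraicClosure F) := fun x y =>
        AlgEquiv.restrictNormal_commutes x.out L y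
      have h2 : ((∏ x, (τ x ((a : L) / (r : L))) ^ c x : L) : AlgebraicClosure F) =
          ∏ x, (x.out ((((a : L) / (r : L) : L) : AlgebraicClosure F))) ^ c x := by
        change algebraMap L (AlgebraicClosure F) _ = _
        rw [map_prod]
        refine Finset.prod_congr rfl fun x _ => ?_
        rw [map_zpow₀]
        exact congrArg (· ^ c x) (h1 x _)
      rw [h2]
      change γ ^ p = _
      rw [hγ, ← Finset.prod_pow]
      refine Finset.prod_congr rfl fun x _ => ?_
      rw [← zpow_natCast, zpow_comm, zpow_natCast, ← map_div₀, ← map_pow, div_pow, hB, hB]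
      rfl)
  obtain ⟨k, hk⟩ := hdvd
  apply hψζ
  have h1 := hc 1 ζ hζ
  rw [hNM _ hone, hNz _ (inv_mem hone) ζ hζ, hk, zpow_mul, zpow_natCast, hζ, one_zpow] at h1
  exact h1
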